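/- Let n ∈ ℕ be even and positive, x_0 ∈ ℝ, h > 0, and x_k = x_0 + k·h for k = 0, ..., n. Let e : ℝ → ℝ be a bounded function with ‖e‖_∞ < ε. Then the derivative of the Lagrange interpolant of e at the central node satisfies |p_n'(e, x_{n/2})| ≤ (ε/h) · Σ_{k=0, k≠n/2}^{n} |Π_{i=0, i≠k, i≠n/2}^{n} (n/2 − i)| / |Π_{i=0, i≠k}^{n} (k − i)|. -/

import Mathlib

open Finset

/-- The `k`-th Lagrange basis polynomial `L_{n,k}` for the equispaced nodes
`x_i = x₀ + i·h`, `i = 0, …, n`:  `L_{n,k}(x) = Π_{i ≠ k} (x − x_i)/(x_k − x_i)`. -/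
noncomputable def lagrangeBasis (n : ℕ) (x₀ h : ℝ) (k : ℕ) (x : ℝ) : ℝ :=
  ∏ i ∈ (Finset.range (n + 1)).erase k,
    (x - (x₀ + (i : ℝ) * h)) / ((x₀ + (k : ℝ) * h) - (x₀ + (i : ℝ) * h))

/-- The Lagrange interpolating polynomial `p_n(f, x) = Σ_{k=0}^{n} f(x_k) · L_{n,k}(x)`
of `f` at the equispaced nodes `x_k = x₀ + k·h`. -/
noncomputable def lagrangeInterp (n : ℕ) (x₀ h : ℝ) (f : ℝ → ℝ) (x : ℝ) : ℝ :=
  ∑ k ∈ Finset.range (n + 1), f (x₀ + (k : ℝ) * h) * lagrangeBasis n x₀ h k x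

/-!
At the node `v j`, the derivative of the interpolant of values `r i` at distinct nodes `v i` is
`r j * ∑ i ≠ j, (v j - v i)⁻¹ + ∑ i ≠ j, r i * D i j`, with `D i j` the derivative of the `i`-th
basis polynomial at `v j`. When the nodes are symmetric about `v j`, the coefficient of `r j`
vanishes, and the triangle inequality bounds what remains. Equispaced nodes reduce to the integers
by the substitution `x ↦ (x - x₀) / h`, which contributes the factor `h⁻¹`.
-/

section ArbitraryNodes

open Polynomial Lagrange

variable {F ι : Type*} [DecidableEq ι] {s : Finset ι} {i j : ι}

section Field

variable [Field F] {v : ι → F}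

lemma eval_basis_eq_prod_div (s : Finset ι) (v : ι → F) (i : ι) (x : F) :
    (Lagrange.basis s v i).eval x = ∏ j ∈ s.erase i, (x - v j) / (v i - v j) := by
  simp only [Lagrange.basis, basisDivisor, eval_prod, eval_mul, eval_C, eval_sub, eval_X,
    div_eq_inv_mul]

lemma basis_eq_C_nodalWeight_mul_nodal_erase (s : Finset ι) (v : ι → F) (i : ι) :
    Lagrange.basis s v i = C (nodalWeight s v i) * nodal (s.erase i) v := by
  simp only [Lagrange.basis, basisDivisor, nodalWeight, nodal, prod_mul_distrib, map_prod]

lemma eval_derivative_basis_of_ne (hj : j ∈ s) (hij : i ≠ j) :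
    (derivative (Lagrange.basis s v i)).eval (v j) =
      (∏ k ∈ (s.erase i).erase j, (v j - v k)) / ∏ k ∈ s.erase i, (v i - v k) := by
  rw [basis_eq_C_nodalWeight_mul_nodal_erase, derivative_C_mul, eval_C_mul,
    eval_nodal_derivative_eval_node_eq (mem_erase.2 ⟨hij.symm, hj⟩),
    nodalWeight_eq_eval_nodal_erase_inv, eval_nodal, eval_nodal, inv_mul_eq_div]

lemma eval_derivative_basis_self (hv : Set.InjOn v s) (hi : i ∈ s) :
    (derivative (Lagrange.basis s v i)).eval (v i) = ∑ j ∈ s.erase i, (v i - v j)⁻¹ := by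
  have hne : ∀ j ∈ s.erase i, v i - v j ≠ 0 := fun j hj ↦
    sub_ne_zero.2 (hv.ne hi (mem_of_mem_erase hj) (ne_of_mem_erase hj).symm)
  rw [basis_eq_C_nodalWeight_mul_nodal_erase, derivative_C_mul, eval_C_mul, derivative_nodal,
    eval_finsetSum, mul_sum]
  refine sum_congr rfl fun j hj ↦ ?_
  have hprod : ∏ k ∈ (s.erase i).erase j, (v i - v k) ≠ 0 :=
    prod_ne_zero_iff.2 fun k hk ↦ hne k (mem_of_mem_erase hk)
  rw [nodalWeight, prod_inv_distrib, ← mul_prod_erase _ _ hj, eval_nodal, mul_inv,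
    inv_mul_cancel_right₀ hprod]

lemma eval_derivative_interpolate_at_node (r : ι → F) (hv : Set.InjOn v s) (hj : j ∈ s) :
    (derivative (interpolate s v r)).eval (v j) =
      r j * ∑ i ∈ s.erase j, (v j - v i)⁻¹ +
        ∑ i ∈ s.erase j, r i *
          ((∏ k ∈ (s.erase i).erase j, (v j - v k)) / ∏ k ∈ s.erase i, (v i - v k)) := by
  simp only [interpolate_apply, derivative_sum, derivative_C_mul, eval_finsetSum, eval_C_mul]
  rw [← add_sum_erase _ _ hj, eval_derivative_basis_self hv hj]
  congr 1
  exact sum_congr rfl fun i hi ↦ by rw [eval_derivative_basis_of_ne hj (ne_of_mem_erase hi)]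

end Field

lemma norm_eval_derivative_interpolate_at_node_le [NormedField F] {v r : ι → F} {ε : ℝ}
    (hv : Set.InjOn v s) (hj : j ∈ s) (hsum : ∑ i ∈ s.erase j, (v j - v i)⁻¹ = 0)
    (hr : ∀ i ∈ s.erase j, ‖r i‖ ≤ ε) :
    ‖(derivative (interpolate s v r)).eval (v j)‖ ≤
      ε * ∑ i ∈ s.erase j,
        ‖∏ k ∈ (s.erase i).erase j, (v j - v k)‖ / ‖∏ k ∈ s.erase i, (v i - v k)‖ := by
  rw [eval_derivative_interpolate_at_node r hv hj, hsum, mul_zero, zero_add, mul_sum]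
  refine norm_sum_le_of_le _ fun i hi ↦ ?_
  rw [norm_mul, norm_div]
  gcongr
  exact hr i hi

end ArbitraryNodes

lemma sum_range_erase_inv_cast_sub_eq_zero (K : Type*) [DivisionRing K] (m : ℕ) :
    ∑ i ∈ (range (2 * m + 1)).erase m, ((m : K) - i)⁻¹ = 0 := by
  refine sum_involution (fun i _ ↦ 2 * m - i) (fun i hi ↦ ?_) ?_ ?_ ?_
  · have hle : i ≤ 2 * m := Nat.lt_succ_iff.1 (mem_range.1 (mem_of_mem_erase hi))
    have hreflect : (m : K) - (2 * m - i : ℕ) = -(m - i) := by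
      rw [Nat.cast_sub hle, two_mul, Nat.cast_add]
      abel
    rw [hreflect, inv_neg, add_neg_cancel]
  all_goals
    simp only [mem_erase, mem_range]
    omega

lemma lagrangeBasis_eq_eval_basis (n : ℕ) (x₀ : ℝ) {h : ℝ} (hh : h ≠ 0) (k : ℕ) (x : ℝ) :
    lagrangeBasis n x₀ h k x =
      (Lagrange.basis (range (n + 1)) (Nat.cast : ℕ → ℝ) k).eval ((x - x₀) / h) := by
  rw [lagrangeBasis, eval_basis_eq_prod_div]
  refine prod_congr rfl fun i _ ↦ ?_
  have hnum : x - (x₀ + i * h) = ((x - x₀) / h - i) * h := by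
    rw [sub_mul, div_mul_cancel₀ _ hh, sub_sub]
  rw [hnum, add_sub_add_left_eq_sub, ← sub_mul, mul_div_mul_right _ _ hh]

lemma lagrangeInterp_eq_eval_interpolate (n : ℕ) (x₀ : ℝ) {h : ℝ} (hh : h ≠ 0) (f : ℝ → ℝ)
    (x : ℝ) :
    lagrangeInterp n x₀ h f x =
      (Lagrange.interpolate (range (n + 1)) (Nat.cast : ℕ → ℝ) fun k ↦ f (x₀ + k * h)).eval
        ((x - x₀) / h) := by
  simp only [lagrangeInterp, lagrangeBasis_eq_eval_basis n x₀ hh, Lagrange.interpolate_apply,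
    Polynomial.eval_finsetSum, Polynomial.eval_C_mul]

lemma deriv_lagrangeInterp (n : ℕ) (x₀ : ℝ) {h : ℝ} (hh : h ≠ 0) (f : ℝ → ℝ) (x : ℝ) :
    deriv (lagrangeInterp n x₀ h f) x =
      (Lagrange.interpolate (range (n + 1)) (Nat.cast : ℕ → ℝ) fun k ↦
        f (x₀ + k * h)).derivative.eval ((x - x₀) / h) / h := by
  rw [funext (lagrangeInterp_eq_eval_interpolate n x₀ hh f), div_eq_mul_one_div _ h]
  exact ((Polynomial.hasDerivAt _ _).comp x
    (((hasDerivAt_id x).sub_const x₀).div_const h)).deriv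

theorem noise_interp_deriv_bound_general (n : ℕ) (hn : Even n) (x₀ h ε : ℝ) (hh : h ≠ 0)
    (e : ℝ → ℝ) (he : ∀ k ∈ (range (n + 1)).erase (n / 2), |e (x₀ + k * h)| ≤ ε) :
    |deriv (lagrangeInterp n x₀ h e) (x₀ + ((n / 2 : ℕ) : ℝ) * h)| ≤
      (ε / |h|) * ∑ k ∈ (range (n + 1)).erase (n / 2),
        |∏ i ∈ ((range (n + 1)).erase k).erase (n / 2), (((n / 2 : ℕ) : ℝ) - (i : ℝ))| /
          |∏ i ∈ (range (n + 1)).erase k, ((k : ℝ) - (i : ℝ))| := by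
  have hcenter : n / 2 ∈ range (n + 1) := mem_range.2 (by omega)
  have hsum : ∑ i ∈ (range (n + 1)).erase (n / 2), (((n / 2 : ℕ) : ℝ) - i)⁻¹ = 0 := by
    simpa only [Nat.two_mul_div_two_of_even hn] using
      sum_range_erase_inv_cast_sub_eq_zero ℝ (n / 2)
  rw [deriv_lagrangeInterp n x₀ hh, add_sub_cancel_left, mul_div_cancel_right₀ _ hh, abs_div,
    div_mul_eq_mul_div]
  gcongr
  exact norm_eval_derivative_interpolate_at_node_le Nat.cast_injective.injOn hcenter hsum he

/-- Bound on the derivative of the Lagrange interpolant of bounded noise `e` at the central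
node: if `‖e‖_∞ < ε`, then
`|p_n'(e, x_{n/2})| ≤ (ε/h) · Σ_{k ≠ n/2} |Π_{i ≠ k, n/2} (n/2 − i)| / |Π_{i ≠ k} (k − i)|`. -/
theorem noise_interp_deriv_bound (n : ℕ) (hn : Even n) (hpos : 0 < n)
    (x₀ h ε : ℝ) (hh : 0 < h) (e : ℝ → ℝ) (he : ∀ x, |e x| < ε) :
    |deriv (lagrangeInterp n x₀ h e) (x₀ + ((n / 2 : ℕ) : ℝ) * h)| ≤
      (ε / h) * ∑ k ∈ (Finset.range (n + 1)).erase (n / 2),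
        |∏ i ∈ ((Finset.range (n + 1)).erase k).erase (n / 2),
            (((n / 2 : ℕ) : ℝ) - (i : ℝ))| /
          |∏ i ∈ (Finset.range (n + 1)).erase k, ((k : ℝ) - (i : ℝ))| := by
  simpa only [abs_of_pos hh] using
    noise_interp_deriv_bound_general n hn x₀ h ε hh.ne' e fun _ _ ↦ (he _).le
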